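/- arXiv:math/9801139 — 2 statements merged into one kernel-verified Lean document; each statement's English description precedes it below -/
import Mathlib

section
/- Let n ≥ 1 and R > 0. If φ : ℝⁿ → ℂ is a smooth function with compact support contained in the open ball B_R(0) and ∫_{ℝⁿ} φ(x) dⁿx = 0, then there exist smooth functions h₁, …, hₙ : ℝⁿ → ℂ, each with compact support contained in B_R(0), such that φ = Σ_{i=1}^{n} ∂h_i/∂x^i. -/
open MeasureTheory

/-- The `i`-th partial derivative of a function on `ℝⁿ` (modeled as Euclidean space). -/
noncomputable def partialDeriv {n : ℕ} (f : EuclideanSpace ℝ (Fin n) → ℂ) (i : Fin n) :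
    EuclideanSpace ℝ (Fin n) → ℂ :=
  fun x => fderiv ℝ f x (EuclideanSpace.single i 1)

/-!
If every line integral of `f` in the direction `v` vanishes, the antiderivative of `f` along `v` is
supported in any convex set containing the support of `f`, so `f` is a `v`-derivative of a compactly
supported function. Fix `η : ℝ → ℝ` with integral `1`, supported near `0`. Replacing `φ` by `η (xᵢ)`
times its integral over the `i`-th coordinate does not change the line integrals in direction `eᵢ`,
hence changes `φ` by a divergence only. After treating all the coordinates, `φ` has become
`x ↦ (∏ i, η (xᵢ)) • ∫ φ`, which is zero. The support grows at each step by at most the radius of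
the support of `η`, so it stays in the open ball if that radius is small.
-/

section

open Function Metric Set
open EuclideanSpace (single)

variable {E F : Type*} [NormedAddCommGroup E] [NormedSpace ℝ E] [NormedAddCommGroup F]

section LineIntegral

variable {f : E → F} {v : E} {k : ℕ∞}

theorem hasCompactSupport_comp_line (hf : HasCompactSupport f) (hv : v ≠ 0) (x : E) :
    HasCompactSupport fun s : ℝ => f (x + s • v) :=
  hf.comp_isClosedEmbedding
    ((Homeomorph.addLeft x).isClosedEmbedding.comp (isClosedEmbedding_smul_left hv))

theorem exists_comp_line_eq_zero_of_lt_abs (hf : HasCompactSupport f) (hv : v ≠ 0) (ρ : ℝ) :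
    ∃ T : ℝ, ∀ x ∈ ball (0 : E) ρ, ∀ s : ℝ, T < |s| → f (x + s • v) = 0 := by
  obtain ⟨r, hr⟩ := hf.isCompact.isBounded.subset_closedBall 0
  refine ⟨(r + ρ) / ‖v‖, fun x hx s hs => image_eq_zero_of_notMem_tsupport fun hmem => ?_⟩
  have hsum : ‖x + s • v‖ ≤ r := mem_closedBall_zero_iff.1 (hr hmem)
  have hxρ : ‖x‖ < ρ := mem_ball_zero_iff.1 hx
  have hsv : r + ρ < ‖s • v‖ := by
    rwa [norm_smul, Real.norm_eq_abs, ← div_lt_iff₀ (norm_pos_iff.2 hv)]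
  have htri : ‖s • v‖ ≤ ‖x + s • v‖ + ‖x‖ := by
    simpa only [add_sub_cancel_left] using norm_sub_le (x + s • v) x
  linarith

theorem integrable_comp_line (hf : Continuous f) (hfc : HasCompactSupport f) (hv : v ≠ 0) (x : E) :
    Integrable fun s : ℝ => f (x + s • v) :=
  Continuous.integrable_of_hasCompactSupport (by fun_prop) (hasCompactSupport_comp_line hfc hv x)

variable [NormedSpace ℝ F]

/-- The integral of `f` over the line through `x` in the direction `v`, parametrized with speed `v`
(the X-ray transform of `f`). -/
noncomputable def lineIntegral (f : E → F) (v x : E) : F :=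
  ∫ s : ℝ, f (x + s • v)

/-- The antiderivative of `f` along the direction `v` that vanishes at `-∞` on each line: the
integral of `f` over the half-line that ends at `x`. -/
noncomputable def lineAntideriv (f : E → F) (v x : E) : F :=
  ∫ s in Iic (0 : ℝ), f (x + s • v)

/- Near a given point, this is the value at `0` of the convolution of the constant `1` with
`u ↦ f (x - u • v)`, in which `x` is a parameter. -/
theorem contDiff_integral_comp_line (hf : ContDiff ℝ k f) (hfc : HasCompactSupport f) (hv : v ≠ 0)
    (μ : Measure ℝ) [IsLocallyFiniteMeasure μ] :
    ContDiff ℝ k fun x => ∫ s, f (x + s • v) ∂μ := by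
  rw [contDiff_iff_contDiffAt]
  intro x
  obtain ⟨T, hT⟩ := exists_comp_line_eq_zero_of_lt_abs hfc hv (‖x‖ + 1)
  have hconv := contDiffOn_convolution_right_with_param (𝕜 := ℝ) (n := k) (μ := μ)
    (f := fun _ : ℝ => (1 : ℝ)) (g := fun (p : E) (u : ℝ) => f (p + (-u) • v))
    (k := closedBall 0 T) (ContinuousLinearMap.lsmul ℝ ℝ : ℝ →L[ℝ] F →L[ℝ] F)
    (isOpen_ball (x := (0 : E)) (ε := ‖x‖ + 1)) (isCompact_closedBall _ _)
    (fun p u hp hu => hT p hp (-u) (by simpa using hu)) (locallyIntegrable_const 1)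
    (hf.comp (by fun_prop)).contDiffOn
  have hnhds : ball (0 : E) (‖x‖ + 1) ×ˢ (univ : Set ℝ) ∈ nhds (x, 0) :=
    (isOpen_ball.prod isOpen_univ).mem_nhds (by simp)
  simpa [comp_def, convolution_def] using
    (hconv.contDiffAt hnhds).comp (f := fun y : E => (y, (0 : ℝ))) x (by fun_prop)

theorem contDiff_lineIntegral (hf : ContDiff ℝ k f) (hfc : HasCompactSupport f) (hv : v ≠ 0) :
    ContDiff ℝ k (lineIntegral f v) :=
  contDiff_integral_comp_line hf hfc hv volume

theorem contDiff_lineAntideriv (hf : ContDiff ℝ k f) (hfc : HasCompactSupport f) (hv : v ≠ 0) :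
    ContDiff ℝ k (lineAntideriv f v) :=
  contDiff_integral_comp_line hf hfc hv (volume.restrict (Iic 0))

theorem lineIntegral_add_smul (f : E → F) (v x : E) (t : ℝ) :
    lineIntegral f v (x + t • v) = lineIntegral f v x := by
  have h := integral_add_left_eq_self (μ := volume) (fun s : ℝ => f (x + s • v)) t
  simpa only [lineIntegral, add_smul, add_assoc] using h

theorem exists_mem_support_of_lineIntegral_ne_zero {x : E} (h : lineIntegral f v x ≠ 0) :
    ∃ s : ℝ, x + s • v ∈ support f := by
  contrapose! h
  simp only [notMem_support] at h
  simp only [lineIntegral, h, integral_zero]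

theorem lineAntideriv_add_smul (f : E → F) (v x : E) (t : ℝ) :
    lineAntideriv f v (x + t • v) = ∫ s in Iic t, f (x + s • v) := by
  have h := (measurePreserving_add_left volume t).setIntegral_preimage_emb
    (measurableEmbedding_addLeft t) (fun s : ℝ => f (x + s • v)) (Iic t)
  simpa only [lineAntideriv, preimage_const_add_Iic, sub_self, add_smul, add_assoc] using h

theorem hasLineDerivAt_lineAntideriv [CompleteSpace F] (hf : Continuous f)
    (hfc : HasCompactSupport f) (hv : v ≠ 0) (x : E) :
    HasLineDerivAt ℝ (lineAntideriv f v) (f x) x v := by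
  have hint := integrable_comp_line hf hfc hv x
  have hcont : Continuous fun s : ℝ => f (x + s • v) := by fun_prop
  have hsplit : (fun t : ℝ => lineAntideriv f v (x + t • v)) =
      fun t => lineAntideriv f v x + ∫ s in (0 : ℝ)..t, f (x + s • v) := by
    ext t
    rw [lineAntideriv_add_smul, ← intervalIntegral.integral_Iic_sub_Iic hint.integrableOn
      hint.integrableOn, lineAntideriv, add_sub_cancel]
  rw [HasLineDerivAt, hsplit]
  simpa only [zero_smul, add_zero] using
    (hcont.integral_hasStrictDerivAt 0 0).hasDerivAt.const_add (lineAntideriv f v x)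

theorem fderiv_lineAntideriv_apply [CompleteSpace F] (hk : k ≠ 0) (hf : ContDiff ℝ k f)
    (hfc : HasCompactSupport f) (hv : v ≠ 0) (x : E) :
    fderiv ℝ (lineAntideriv f v) x v = f x := by
  have hdiff : DifferentiableAt ℝ (lineAntideriv f v) x :=
    (contDiff_lineAntideriv hf hfc hv).differentiable (mod_cast hk) x
  rw [← hdiff.lineDeriv_eq_fderiv]
  exact (hasLineDerivAt_lineAntideriv hf.continuous hfc hv x).lineDeriv

/- From a point outside the convex set `K`, a line meets `K` on one side only: the integral over the
other half-line is zero, and that over the first one is then the whole line integral. -/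
theorem support_lineAntideriv_subset (hf : Continuous f) (hfc : HasCompactSupport f) (hv : v ≠ 0)
    {K : Set E} (hK : Convex ℝ K) (hfK : support f ⊆ K) (h0 : ∀ x, lineIntegral f v x = 0) :
    support (lineAntideriv f v) ⊆ K := by
  intro x hx
  by_contra hxK
  obtain ⟨a, ha, hfa⟩ : ∃ a ≤ (0 : ℝ), f (x + a • v) ≠ 0 := by
    by_contra! hzero
    exact hx (setIntegral_eq_zero_of_forall_eq_zero hzero)
  have hright : ∀ b ∈ (Iic (0 : ℝ))ᶜ, f (x + b • v) = 0 := by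
    intro b hb
    by_contra hfb
    have hline : Convex ℝ {s : ℝ | x + s • v ∈ K} := by
      simpa [preimage, AffineMap.lineMap_apply, add_comm] using
        hK.affine_preimage (AffineMap.lineMap (k := ℝ) x (x + v))
    have hb0 : 0 ≤ b := (notMem_Iic.1 hb).le
    exact hxK (by simpa using hline.ordConnected.out (hfK hfa) (hfK hfb) ⟨ha, hb0⟩)
  have hsum := integral_add_compl (measurableSet_Iic (a := 0)) (integrable_comp_line hf hfc hv x)
  rw [setIntegral_eq_zero_of_forall_eq_zero hright, add_zero] at hsum
  exact hx (hsum.trans (h0 x))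

end LineIntegral

variable [NormedSpace ℝ F]

theorem integral_fderiv_apply_eq_zero [MeasurableSpace E] [BorelSpace E] [FiniteDimensional ℝ E]
    {f : E → F} (hf : ContDiff ℝ 1 f) (hfc : HasCompactSupport f) (v : E) (μ : Measure E)
    [μ.IsAddHaarMeasure] : ∫ x, fderiv ℝ f x v ∂μ = 0 := by
  have hf' : Integrable (fun x => fderiv ℝ f x v) μ :=
    ((hf.continuous_fderiv one_ne_zero).clm_apply continuous_const).integrable_of_hasCompactSupport
      (hfc.fderiv_apply ℝ v)
  simpa using integral_smul_fderiv_eq_neg_fderiv_smul_of_integrable (μ := μ)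
    (f := fun _ => (1 : ℝ)) (g := f) (v := v) (by simp) (by simpa using hf')
    (by simpa using hf.continuous.integrable_of_hasCompactSupport hfc) (by simp)
    (fun x _ => hf.differentiable one_ne_zero x)

theorem integral_euclideanSpace_prod_eq_prod {ι : Type*} [Fintype ι] {𝕜 : Type*} [RCLike 𝕜]
    (f : ι → ℝ → 𝕜) : ∫ x : EuclideanSpace ℝ ι, ∏ i, f i (x i) = ∏ i, ∫ s, f i s :=
  ((EuclideanSpace.volume_preserving_symm_measurableEquiv_toLp ι).integral_comp'
    fun y => ∏ i, f i (y i)).trans (integral_fintype_prod_volume_eq_prod f)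

section Divergence

variable {ι : Type*} [Fintype ι] [DecidableEq ι] {k : ℕ∞} {f g : EuclideanSpace ℝ ι → F}

/-- `f` is the divergence of a `C^k` field `h = (hᵢ)` with coefficients in `F` and with support
in `K`. -/
def HasDivergenceRep (k : ℕ∞) (K : Set (EuclideanSpace ℝ ι)) (f : EuclideanSpace ℝ ι → F) : Prop :=
  ∃ h : ι → EuclideanSpace ℝ ι → F, (∀ i, ContDiff ℝ k (h i)) ∧ (∀ i, support (h i) ⊆ K) ∧
    f = fun x => ∑ i, fderiv ℝ (h i) x (single i 1)

namespace HasDivergenceRep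

variable {K L : Set (EuclideanSpace ℝ ι)}

theorem zero (k : ℕ∞) (K : Set (EuclideanSpace ℝ ι)) :
    HasDivergenceRep k K (0 : EuclideanSpace ℝ ι → F) :=
  ⟨0, fun _ => contDiff_const, by simp, by ext; simp⟩

theorem mono (hf : HasDivergenceRep k K f) (hKL : K ⊆ L) : HasDivergenceRep k L f :=
  let ⟨h, hsmooth, hsupp, hdiv⟩ := hf
  ⟨h, hsmooth, fun i => (hsupp i).trans hKL, hdiv⟩

theorem add (hk : k ≠ 0) (hf : HasDivergenceRep k K f) (hg : HasDivergenceRep k K g) :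
    HasDivergenceRep k K (f + g) := by
  obtain ⟨u, hu, huK, rfl⟩ := hf
  obtain ⟨w, hw, hwK, rfl⟩ := hg
  have hk' : (k : WithTop ℕ∞) ≠ 0 := mod_cast hk
  refine ⟨u + w, fun i => (hu i).add (hw i),
    fun i => (support_add _ _).trans (union_subset (huK i) (hwK i)), ?_⟩
  ext x
  simp only [Pi.add_apply, ← Finset.sum_add_distrib, ← add_apply]
  exact Finset.sum_congr rfl fun i _ => congrArg (· (single i 1))
    (fderiv_add ((hu i).differentiable hk' x) ((hw i).differentiable hk' x)).symm

theorem of_fderiv (i : ι) (hf : ContDiff ℝ k f) (hfK : support f ⊆ K) :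
    HasDivergenceRep k K fun x => fderiv ℝ f x (single i 1) := by
  refine ⟨Pi.single i f, fun j => ?_, fun j => ?_, ?_⟩
  · obtain rfl | hj := eq_or_ne j i
    · simpa only [Pi.single_eq_same] using hf
    · rw [Pi.single_eq_of_ne hj]
      exact contDiff_const
  · obtain rfl | hj := eq_or_ne j i
    · simpa only [Pi.single_eq_same] using hfK
    · simp only [Pi.single_eq_of_ne hj, support_zero, empty_subset]
  · ext x
    rw [Finset.sum_eq_single_of_mem i (Finset.mem_univ i) fun j _ hj => by
      simp [Pi.single_eq_of_ne hj], Pi.single_eq_same]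

theorem of_lineIntegral_eq_zero [CompleteSpace F] (hk : k ≠ 0) (hf : ContDiff ℝ k f)
    (hfc : HasCompactSupport f) (hK : Convex ℝ K) (hfK : support f ⊆ K) (i : ι)
    (h0 : ∀ x, lineIntegral f (single i 1) x = 0) : HasDivergenceRep k K f := by
  have hi : (single i 1 : EuclideanSpace ℝ ι) ≠ 0 := by simp
  simpa only [fderiv_lineAntideriv_apply hk hf hfc hi] using
    of_fderiv i (contDiff_lineAntideriv hf hfc hi)
      (support_lineAntideriv_subset hf.continuous hfc hi hK hfK h0)

theorem integral_eq_zero (hk : k ≠ 0) (hK : IsCompact K) (hf : HasDivergenceRep k K f) :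
    ∫ x, f x = 0 := by
  obtain ⟨h, hsmooth, hsupp, rfl⟩ := hf
  have hC1 : ∀ i, ContDiff ℝ 1 (h i) := fun i =>
    (hsmooth i).of_le (mod_cast Order.one_le_iff_ne_zero.2 hk)
  have hcs : ∀ i, HasCompactSupport (h i) := fun i => .of_support_subset_isCompact hK (hsupp i)
  have hint : ∀ i, Integrable fun x => fderiv ℝ (h i) x (single i 1) := fun i =>
    (((hC1 i).continuous_fderiv one_ne_zero).clm_apply
      continuous_const).integrable_of_hasCompactSupport ((hcs i).fderiv_apply ℝ _)
  rw [integral_finsetSum _ fun i _ => hint i]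
  exact Finset.sum_eq_zero fun i _ => integral_fderiv_apply_eq_zero (hC1 i) (hcs i) _ _

end HasDivergenceRep

theorem norm_sub_smul_single_le (x : EuclideanSpace ℝ ι) (i : ι) (s : ℝ) :
    ‖x - x i • single i (1 : ℝ)‖ ≤ ‖x + s • single i (1 : ℝ)‖ := by
  rw [EuclideanSpace.norm_eq, EuclideanSpace.norm_eq]
  refine Real.sqrt_le_sqrt (Finset.sum_le_sum fun j _ => ?_)
  obtain rfl | hj := eq_or_ne j i
  · simp [sq_nonneg]
  · simp [hj]

/-- The function obtained from `f` by spreading its integral over the `i`-th coordinate with the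
weight `η`. -/
noncomputable def concentrate (η : ℝ → ℝ) (i : ι) (f : EuclideanSpace ℝ ι → F)
    (x : EuclideanSpace ℝ ι) : F :=
  η (x i) • lineIntegral f (single i 1) x

variable {η : ℝ → ℝ} {r ε : ℝ}

theorem contDiff_concentrate (hη : ContDiff ℝ k η) (hf : ContDiff ℝ k f)
    (hfc : HasCompactSupport f) (i : ι) : ContDiff ℝ k (concentrate η i f) :=
  (hη.comp (by fun_prop)).smul (contDiff_lineIntegral hf hfc (by simp))

theorem support_concentrate_subset (hη : support η ⊆ closedBall 0 ε)
    (hf : support f ⊆ closedBall 0 r) (i : ι) :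
    support (concentrate η i f) ⊆ closedBall 0 (r + ε) := by
  intro x hx
  obtain ⟨hηx, hfx⟩ := smul_ne_zero_iff.1 (mem_support.1 hx)
  obtain ⟨s, hs⟩ := exists_mem_support_of_lineIntegral_ne_zero hfx
  have hsr : ‖x + s • single i (1 : ℝ)‖ ≤ r := mem_closedBall_zero_iff.1 (hf hs)
  have hxi : ‖x i‖ ≤ ε := mem_closedBall_zero_iff.1 (hη hηx)
  rw [mem_closedBall_zero_iff]
  calc ‖x‖ = ‖(x - x i • single i (1 : ℝ)) + x i • single i (1 : ℝ)‖ := by rw [sub_add_cancel]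
    _ ≤ ‖x - x i • single i (1 : ℝ)‖ + ‖x i • single i (1 : ℝ)‖ := norm_add_le _ _
    _ ≤ r + ε := add_le_add ((norm_sub_smul_single_le x i s).trans hsr)
      (by simpa [norm_smul] using hxi)

theorem lineIntegral_concentrate [CompleteSpace F] (hη : ∫ s, η s = 1) (i : ι)
    (x : EuclideanSpace ℝ ι) :
    lineIntegral (concentrate η i f) (single i 1) x = lineIntegral f (single i 1) x := by
  have hcoord : ∀ s : ℝ, (x + s • single i (1 : ℝ)) i = x i + s := fun s => by simp
  calc lineIntegral (concentrate η i f) (single i 1) x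
      = ∫ s, η (x i + s) • lineIntegral f (single i 1) x := by
        rw [lineIntegral]
        simp only [concentrate, lineIntegral_add_smul, hcoord]
    _ = lineIntegral f (single i 1) x := by
        rw [integral_smul_const, integral_add_left_eq_self η (x i), hη, one_smul]

theorem hasDivergenceRep_sub_concentrate [CompleteSpace F] (hk : k ≠ 0) (hη : ContDiff ℝ k η)
    (hηε : support η ⊆ closedBall 0 ε) (hη1 : ∫ s, η s = 1) (hε : 0 ≤ ε) (hf : ContDiff ℝ k f)
    (hfr : support f ⊆ closedBall 0 r) (i : ι) :
    HasDivergenceRep k (closedBall 0 (r + ε)) (f - concentrate η i f) := by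
  have hfc : HasCompactSupport f := .of_support_subset_isCompact (isCompact_closedBall 0 r) hfr
  have hg : ContDiff ℝ k (concentrate η i f) := contDiff_concentrate hη hf hfc i
  have hgr := support_concentrate_subset hηε hfr i
  have hgc : HasCompactSupport (concentrate η i f) :=
    .of_support_subset_isCompact (isCompact_closedBall 0 _) hgr
  have hi : (single i 1 : EuclideanSpace ℝ ι) ≠ 0 := by simp
  refine .of_lineIntegral_eq_zero hk (hf.sub hg) (hfc.sub hgc) (convex_closedBall 0 _)
    ((support_sub _ _).trans (union_subset (hfr.trans (closedBall_subset_closedBall ?_)) hgr)) i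
    fun x => ?_
  · exact le_add_of_nonneg_right hε
  · calc lineIntegral (f - concentrate η i f) (single i 1) x
        = lineIntegral f (single i 1) x - lineIntegral (concentrate η i f) (single i 1) x :=
          integral_sub (integrable_comp_line hf.continuous hfc hi x)
            (integrable_comp_line hg.continuous hgc hi x)
      _ = 0 := by rw [lineIntegral_concentrate hη1, sub_self]

/-- `f` is the product of the weights `η (xᵢ)` for `i ∈ S` and of a function that does not depend on
the coordinates in `S`. -/
def IsProductAlong (η : ℝ → ℝ) (S : Finset ι) (f : EuclideanSpace ℝ ι → F) : Prop :=
  ∃ g : EuclideanSpace ℝ ι → F, (∀ i ∈ S, ∀ x, ∀ t : ℝ, g (x + t • single i 1) = g x) ∧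
    ∀ x, f x = (∏ i ∈ S, η (x i)) • g x

namespace IsProductAlong

variable {S : Finset ι}

theorem insert_concentrate {j : ι} (hj : j ∉ S) (hf : IsProductAlong η S f) :
    IsProductAlong η (insert j S) (concentrate η j f) := by
  obtain ⟨g, hg, hfg⟩ := hf
  refine ⟨lineIntegral g (single j 1), fun i hi x t => ?_, fun x => ?_⟩
  · obtain rfl | hi := Finset.mem_insert.1 hi
    · exact lineIntegral_add_smul g _ x t
    · simp only [lineIntegral, add_right_comm x (t • _), hg i hi]
  · have hweights : ∀ s : ℝ,
        ∏ i ∈ S, η ((x + s • single j 1 : EuclideanSpace ℝ ι) i) = ∏ i ∈ S, η (x i) := fun s =>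
      Finset.prod_congr rfl fun i hi => by simp [ne_of_mem_of_not_mem hi hj]
    simp only [concentrate, lineIntegral, hfg, hweights, integral_smul,
      Finset.prod_insert hj, mul_smul]

theorem eq_prod_smul (hf : IsProductAlong η Finset.univ f) :
    ∃ c : F, f = fun x => (∏ i, η (x i)) • c := by
  obtain ⟨g, hg, hfg⟩ := hf
  have hpartial : ∀ (x : EuclideanSpace ℝ ι) (S : Finset ι),
      g (∑ i ∈ S, x i • single i (1 : ℝ)) = g 0 := by
    intro x S
    induction S using Finset.induction_on with
    | empty => rw [Finset.sum_empty]
    | insert j S hj ih => rw [Finset.sum_insert hj, add_comm, hg j (Finset.mem_univ j), ih]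
  have hsum : ∀ x : EuclideanSpace ℝ ι, ∑ i, x i • single i (1 : ℝ) = x := fun x => by
    simpa using (EuclideanSpace.basisFun ι ℝ).sum_repr x
  exact ⟨g 0, funext fun x => by rw [hfg, ← hpartial x Finset.univ, hsum]⟩

theorem eq_zero [CompleteSpace F] (hf : IsProductAlong η Finset.univ f) (hη : ∫ s, η s = 1)
    (hint : ∫ x, f x = 0) : f = 0 := by
  obtain ⟨c, rfl⟩ := hf.eq_prod_smul
  have hc : c = 0 := by
    simpa only [integral_smul_const, integral_euclideanSpace_prod_eq_prod (fun _ : ι => η), hη,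
      Finset.prod_const_one, one_smul] using hint
  simp only [hc, smul_zero, Pi.zero_def]

end IsProductAlong

theorem exists_isProductAlong_hasDivergenceRep_sub [CompleteSpace F] (hk : k ≠ 0)
    (hη : ContDiff ℝ k η) (hηε : support η ⊆ closedBall 0 ε) (hη1 : ∫ s, η s = 1) (hε : 0 ≤ ε)
    (hf : ContDiff ℝ k f) (hfr : support f ⊆ closedBall 0 r) (S : Finset ι) :
    ∃ g : EuclideanSpace ℝ ι → F, IsProductAlong η S g ∧ ContDiff ℝ k g ∧
      support g ⊆ closedBall 0 (r + S.card * ε) ∧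
      HasDivergenceRep k (closedBall 0 (r + S.card * ε)) (f - g) := by
  induction S using Finset.induction_on with
  | empty =>
    exact ⟨f, ⟨f, by simp, by simp⟩, hf, by simpa using hfr,
      by simpa using HasDivergenceRep.zero k _⟩
  | insert j S hj ih =>
    obtain ⟨g, hprod, hg, hgr, hfg⟩ := ih
    have hgc : HasCompactSupport g := .of_support_subset_isCompact (isCompact_closedBall 0 _) hgr
    have hradius : r + ((insert j S).card : ℝ) * ε = r + S.card * ε + ε := by
      rw [Finset.card_insert_of_notMem hj]
      push_cast
      ring
    rw [hradius]
    refine ⟨concentrate η j g, hprod.insert_concentrate hj, contDiff_concentrate hη hg hgc j,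
      support_concentrate_subset hηε hgr j, ?_⟩
    simpa only [sub_add_sub_cancel] using
      (hfg.mono (closedBall_subset_closedBall (le_add_of_nonneg_right hε))).add hk
        (hasDivergenceRep_sub_concentrate hk hη hηε hη1 hε hg hgr j)

theorem hasDivergenceRep_of_integral_eq_zero [CompleteSpace F] (hk : k ≠ 0) (hε : 0 < ε)
    (hf : ContDiff ℝ k f) (hfr : support f ⊆ closedBall 0 r) (hint : ∫ x, f x = 0) :
    HasDivergenceRep k (closedBall 0 (r + Fintype.card ι * ε)) f := by
  let bump : ContDiffBump (0 : ℝ) := ⟨ε / 2, ε, half_pos hε, half_lt_self hε⟩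
  have hη1 : ∫ s, bump.normed volume s = 1 := bump.integral_normed
  obtain ⟨g, hprod, hg, hgr, hfg⟩ := exists_isProductAlong_hasDivergenceRep_sub hk
    bump.contDiff_normed (bump.support_normed_eq.trans_subset ball_subset_closedBall) hη1 hε.le
    hf hfr Finset.univ
  have hfi : Integrable f := hf.continuous.integrable_of_hasCompactSupport
    (.of_support_subset_isCompact (isCompact_closedBall 0 _) hfr)
  have hgi : Integrable g := hg.continuous.integrable_of_hasCompactSupport
    (.of_support_subset_isCompact (isCompact_closedBall 0 _) hgr)
  have hgint : ∫ x, g x = 0 := by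
    have hsub : ∫ x, (f x - g x) = 0 := hfg.integral_eq_zero hk (isCompact_closedBall 0 _)
    rwa [integral_sub hfi hgi, hint, zero_sub, neg_eq_zero] at hsub
  rwa [hprod.eq_zero hη1 hgint, sub_zero] at hfg

theorem exists_divergence_rep_of_integral_eq_zero_general [CompleteSpace F] (hk : k ≠ 0) {R : ℝ}
    (hf : ContDiff ℝ k f) (hfR : tsupport f ⊆ ball 0 R) (hint : ∫ x, f x = 0) :
    ∃ h : ι → EuclideanSpace ℝ ι → F,
      (∀ i, ContDiff ℝ k (h i)) ∧
      (∀ i, HasCompactSupport (h i)) ∧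
      (∀ i, tsupport (h i) ⊆ ball 0 R) ∧
      f = fun x => ∑ i, fderiv ℝ (h i) x (single i 1) := by
  obtain ⟨r, hrR, hfr⟩ := exists_lt_subset_ball (isClosed_tsupport f) hfR
  obtain ⟨ε, hε, hεR⟩ : ∃ ε > 0, Fintype.card ι * ε < R - r :=
    exists_pos_mul_lt (sub_pos.2 hrR) _
  obtain ⟨h, hsmooth, hsupp, hdiv⟩ := hasDivergenceRep_of_integral_eq_zero hk hε hf
    ((subset_tsupport f).trans (hfr.trans ball_subset_closedBall)) hint
  exact ⟨h, hsmooth, fun i => .of_support_subset_isCompact (isCompact_closedBall 0 _) (hsupp i),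
    fun i => (closure_minimal (hsupp i) isClosed_closedBall).trans
      (closedBall_subset_ball (by linarith)), hdiv⟩

end Divergence

end

/-- If `n ≥ 1`, `R > 0` and `φ : ℝⁿ → ℂ` is a smooth function with compact
support contained in the open Euclidean ball `B_R(0)` whose Lebesgue integral vanishes, then
there are smooth functions `h₁, …, hₙ`, each with compact support contained in `B_R(0)`,
such that `φ = Σᵢ ∂hᵢ/∂xⁱ`. -/
theorem exists_divergence_rep_of_integral_eq_zero
    (n : ℕ) (hn : 1 ≤ n) (R : ℝ) (hR : 0 < R)
    (φ : EuclideanSpace ℝ (Fin n) → ℂ)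
    (hφ : ContDiff ℝ (⊤ : ℕ∞) φ)
    (hφc : HasCompactSupport φ)
    (hφsupp : tsupport φ ⊆ Metric.ball (0 : EuclideanSpace ℝ (Fin n)) R)
    (hint : ∫ x, φ x = 0) :
    ∃ h : Fin n → EuclideanSpace ℝ (Fin n) → ℂ,
      (∀ i, ContDiff ℝ (⊤ : ℕ∞) (h i)) ∧
      (∀ i, HasCompactSupport (h i)) ∧
      (∀ i, tsupport (h i) ⊆ Metric.ball (0 : EuclideanSpace ℝ (Fin n)) R) ∧
      φ = fun x => ∑ i, partialDeriv (h i) i x := by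
  exact exists_divergence_rep_of_integral_eq_zero_general (by simp) hφ hφsupp hint
end

section
/- Let n ≥ 1 and let f ∈ C_c^∞(ℝⁿ). Then there exist h₁, …, hₙ ∈ C_c^∞(ℝⁿ) with f = Σ_{i=1}^{n} ∂h_i/∂x^i if and only if ∫_{ℝⁿ} f(x) dⁿx = 0. In other words, the linear span of partial derivatives of compactly supported smooth functions is exactly the kernel of the integration functional, a subspace of codimension one in C_c^∞(ℝⁿ). -/
open MeasureTheory

/-!
A translate differs from the original by a divergence: `f x - f (x - y)` is the integral over
`t ∈ [0, 1]` of the derivative of `f` at `x - t y` in the direction `y = ∑ᵢ yᵢ eᵢ`. Integrating in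
`y` against a test function `g` exhibits `(∫ g) f - f ⋆ g` as a divergence of test functions. Since
convolution is commutative, `(∫ g) f - (∫ f) g` is the difference of two such expressions, hence a
divergence too. Taking `∫ g = 1`, every `f` with `∫ f = 0` is a divergence; the converse is
integration by parts.
-/

open Set
open scoped ContDiff Convolution

section ParametricIntegral

variable {P Y F : Type*} [NormedAddCommGroup P] [NormedSpace ℝ P]
  [NormedAddCommGroup F] [NormedSpace ℝ F]

theorem hasFDerivAt_setIntegral_of_isCompact [FiniteDimensional ℝ P] [TopologicalSpace Y]
    [T2Space Y] [MeasurableSpace Y] [BorelSpace Y] {ν : Measure Y} [IsFiniteMeasureOnCompacts ν]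
    {k : Set Y} (hk : IsCompact k) {K : P → Y → F} (hK : Continuous ↿K)
    (hK_diff : ∀ y, Differentiable ℝ (K · y))
    (hK' : Continuous fun q : P × Y => fderiv ℝ (K · q.2) q.1) (p : P) :
    HasFDerivAt (fun p => ∫ y in k, K p y ∂ν) (∫ y in k, fderiv ℝ (K · y) p ∂ν) p := by
  have hslice (p : P) : ContinuousOn (K p) k := (hK.comp (.prodMk_right p)).continuousOn
  have hslice' : ContinuousOn (fun y => fderiv ℝ (K · y) p) k :=
    (hK'.comp (.prodMk_right p)).continuousOn
  obtain ⟨C, hC⟩ := ((isCompact_closedBall p 1).prod hk).exists_bound_of_continuousOn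
    hK'.continuousOn
  refine hasFDerivAt_integral_of_dominated_of_fderiv_le (bound := fun _ => C)
    (Metric.closedBall_mem_nhds p one_pos)
    (.of_forall fun p => (hslice p).aestronglyMeasurable_of_isCompact hk hk.measurableSet)
    ((hslice p).integrableOn_compact hk)
    (hslice'.aestronglyMeasurable_of_isCompact hk hk.measurableSet)
    ?_ (integrableOn_const hk.measure_ne_top) (.of_forall fun y q _ => (hK_diff y q).hasFDerivAt)
  filter_upwards [ae_restrict_mem hk.measurableSet] with y hy q hq using hC (q, y) ⟨hq, hy⟩

variable [NormedAddCommGroup Y] [NormedSpace ℝ Y] {K : P → Y → F}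

theorem contDiff_uncurry_fderiv_left {m n : ℕ∞ω} (hK : ContDiff ℝ n ↿K) (hmn : m + 1 ≤ n) :
    ContDiff ℝ m fun q : P × Y => fderiv ℝ (K · q.2) q.1 :=
  ContDiff.fderiv (f := fun q p => K p q.2)
    (hK.comp (by fun_prop : ContDiff ℝ n fun z : (P × Y) × P => (z.2, z.1.2))) contDiff_fst hmn

variable [FiniteDimensional ℝ P] [MeasurableSpace Y] [BorelSpace Y] {ν : Measure Y} {k : Set Y}

theorem hasFDerivAt_setIntegral_of_contDiff [IsFiniteMeasureOnCompacts ν] (hk : IsCompact k)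
    (hK : ContDiff ℝ 1 ↿K) (p : P) :
    HasFDerivAt (fun p => ∫ y in k, K p y ∂ν) (∫ y in k, fderiv ℝ (K · y) p ∂ν) p :=
  hasFDerivAt_setIntegral_of_isCompact hk hK.continuous
    (fun y => (hK.comp (contDiff_prodMk_left y)).differentiable one_ne_zero)
    (contDiff_uncurry_fderiv_left (m := 0) hK (by simp)).continuous p

theorem fderiv_setIntegral_apply [IsFiniteMeasureOnCompacts ν] (hk : IsCompact k)
    (hK : ContDiff ℝ 1 ↿K) (p v : P) :
    fderiv ℝ (fun p => ∫ y in k, K p y ∂ν) p v = ∫ y in k, fderiv ℝ (K · y) p v ∂ν := by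
  have hK' : Continuous fun q : P × Y => fderiv ℝ (K · q.2) q.1 :=
    (contDiff_uncurry_fderiv_left (m := 0) hK (by simp)).continuous
  rw [(hasFDerivAt_setIntegral_of_contDiff hk hK p).fderiv, ContinuousLinearMap.integral_apply]
  exact (hK'.comp (.prodMk_right p)).continuousOn.integrableOn_compact hk

theorem contDiff_setIntegral_of_isCompact [IsLocallyFiniteMeasure ν]
    [SecondCountableTopologyEither Y F] (hk : IsCompact k) {n : ℕ∞} (hK : ContDiff ℝ n ↿K) :
    ContDiff ℝ n fun p => ∫ y in k, K p y ∂ν := by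
  refine contDiff_iff_forall_nat_le.2 fun m hm => ?_
  replace hK : ContDiff ℝ m ↿K := hK.of_le (mod_cast hm)
  clear hm
  induction m generalizing K with
  | zero => exact contDiff_zero.2 (continuous_parametric_integral_of_continuous hK.continuous hk)
  | succ m ih =>
    have hK₁ : ContDiff ℝ 1 ↿K := hK.of_le (by simp)
    refine contDiff_succ_iff_fderiv_apply.2
      ⟨fun p => (hasFDerivAt_setIntegral_of_contDiff hk hK₁ p).differentiableAt,
        fun hm => absurd hm (WithTop.natCast_ne_top m), fun v => ?_⟩
    simp_rw [fderiv_setIntegral_apply hk hK₁]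
    exact ih ((contDiff_uncurry_fderiv_left hK le_rfl).clm_apply contDiff_const)

end ParametricIntegral

section TestDivergence

variable {ι E F : Type*} [Fintype ι] [NormedAddCommGroup E] [NormedSpace ℝ E]
  [NormedAddCommGroup F] [NormedSpace ℝ F] {v : ι → E} {f g h : E → F}

/-- `f` is the divergence of a vector field of test functions: a sum of derivatives `∂_{v i} (h i)`
with every `h i` smooth and compactly supported. For `v` a basis of `E`, the `h i` are the
coordinates of the field; the notion makes sense for any finite family of directions. -/
def IsTestDivergence (v : ι → E) (f : E → F) : Prop :=
  ∃ h : ι → E → F, (∀ i, ContDiff ℝ ∞ (h i)) ∧ (∀ i, HasCompactSupport (h i)) ∧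
    f = fun x => ∑ i, fderiv ℝ (h i) x (v i)

theorem IsTestDivergence.sub (hf : IsTestDivergence v f) (hg : IsTestDivergence v g) :
    IsTestDivergence v (f - g) := by
  obtain ⟨h, hh, hhc, rfl⟩ := hf
  obtain ⟨k, hk, hkc, rfl⟩ := hg
  refine ⟨fun i => h i - k i, fun i => (hh i).sub (hk i), fun i => (hhc i).sub (hkc i), ?_⟩
  have hd {u : E → F} (hu : ContDiff ℝ ∞ u) (x : E) : DifferentiableAt ℝ u x :=
    hu.differentiable (by simp) x
  ext x
  simp [fderiv_sub (hd (hh _) x) (hd (hk _) x)]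

variable [MeasurableSpace E] [BorelSpace E] {μ : Measure E}

theorem integrable_fderiv_apply [IsFiniteMeasureOnCompacts μ] (hh : ContDiff ℝ 1 h)
    (hhc : HasCompactSupport h) (v : E) : Integrable (fun x => fderiv ℝ h x v) μ :=
  ((hh.continuous_fderiv one_ne_zero).clm_apply continuous_const).integrable_of_hasCompactSupport
    (hhc.fderiv_apply ℝ v)

variable [FiniteDimensional ℝ E] [μ.IsAddHaarMeasure]

theorem integral_fderiv_apply_eq_zero_s4 (hh : ContDiff ℝ 1 h) (hhc : HasCompactSupport h) (v : E) :
    ∫ x, fderiv ℝ h x v ∂μ = 0 := by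
  simpa using integral_smul_fderiv_eq_neg_fderiv_smul_of_integrable (𝕜 := ℝ) (μ := μ)
    (f := fun _ => 1) (g := h) (v := v) (by simp) (by simpa using! integrable_fderiv_apply hh hhc v)
    (by simpa using! hh.continuous.integrable_of_hasCompactSupport hhc)
    (fun _ _ => differentiableAt_const 1) (fun x _ => hh.differentiable one_ne_zero x)

theorem IsTestDivergence.integral_eq_zero (hf : IsTestDivergence v f) : ∫ x, f x ∂μ = 0 := by
  obtain ⟨h, hh, hhc, rfl⟩ := hf
  have hh₁ (i : ι) : ContDiff ℝ 1 (h i) := (hh i).of_le (by simp)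
  rw [integral_finsetSum _ fun i _ => integrable_fderiv_apply (hh₁ i) (hhc i) (v i)]
  exact Finset.sum_eq_zero fun i _ => integral_fderiv_apply_eq_zero_s4 (hh₁ i) (hhc i) (v i)

end TestDivergence

theorem setIntegral_Icc_fderiv_sub_smul {E F : Type*} [NormedAddCommGroup E] [NormedSpace ℝ E]
    [NormedAddCommGroup F] [NormedSpace ℝ F] [CompleteSpace F] {f : E → F} (hf : ContDiff ℝ 1 f)
    (x y : E) : ∫ t in Icc (0 : ℝ) 1, fderiv ℝ f (x - t • y) y = f x - f (x - y) := by
  have hderiv (t : ℝ) : HasDerivAt (fun t : ℝ => f (x - t • y)) (-fderiv ℝ f (x - t • y) y) t := by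
    have hline : HasDerivAt (fun t : ℝ => x - t • y) (-y) t := by
      simpa using ((hasDerivAt_id t).smul_const y).const_sub x
    simpa [Function.comp_def] using
      (hf.differentiable one_ne_zero _).hasFDerivAt.comp_hasDerivAt t hline
  have hftc := intervalIntegral.integral_eq_sub_of_hasDerivAt (a := 0) (b := 1)
    (fun t _ => hderiv t) (Continuous.intervalIntegrable (by fun_prop) _ _)
  rw [integral_Icc_eq_integral_Ioc, ← intervalIntegral.integral_of_le zero_le_one, ← neg_inj,
    ← intervalIntegral.integral_neg, hftc]
  simp

section TransportPotential

variable {ι E F₁ F₂ F₃ : Type*} [Fintype ι] [NormedAddCommGroup E] [NormedSpace ℝ E]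
  [NormedAddCommGroup F₁] [NormedSpace ℝ F₁] [NormedAddCommGroup F₂] [NormedSpace ℝ F₂]
  [NormedAddCommGroup F₃] [NormedSpace ℝ F₃] (L : F₁ →L[ℝ] F₂ →L[ℝ] F₃) {f : E → F₁} {g : E → F₂}

theorem contDiff_uncurry_smul_bilin_sub_smul (ℓ : E →L[ℝ] ℝ) {n : ℕ∞ω} (hf : ContDiff ℝ n f)
    (hg : ContDiff ℝ n g) :
    ContDiff ℝ n ↿fun (x : E) (z : E × ℝ) => ℓ z.1 • L (f (x - z.2 • z.1)) (g z.1) := by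
  dsimp only [Function.HasUncurry.uncurry, id]
  fun_prop

variable [MeasurableSpace E] {μ : Measure E}

/-- The component along the functional `ℓ` of the vector field
`x ↦ ∫ y, ∫ t in [0, 1], f (x - t y) g(y) y`, whose divergence is `(∫ g) f - f ⋆ g`; the product of
values of `f` and `g` is a bilinear map `L`. A single integral over the compact set
`tsupport g × [0, 1]` allows differentiation under it. -/
noncomputable def transportPotential (μ : Measure E) (f : E → F₁) (g : E → F₂) (ℓ : E →L[ℝ] ℝ)
    (x : E) : F₃ :=
  ∫ z in tsupport g ×ˢ Icc (0 : ℝ) 1, ℓ z.1 • L (f (x - z.2 • z.1)) (g z.1) ∂μ.prod volume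

theorem hasCompactSupport_transportPotential (ℓ : E →L[ℝ] ℝ) (hfc : HasCompactSupport f)
    (hgc : HasCompactSupport g) : HasCompactSupport (transportPotential L μ f g ℓ) := by
  have hcompact : IsCompact ((fun q : E × E × ℝ => q.1 + q.2.2 • q.2.1) ''
      (tsupport f ×ˢ tsupport g ×ˢ Icc (0 : ℝ) 1)) :=
    (hfc.isCompact.prod (hgc.isCompact.prod isCompact_Icc)).image (by fun_prop)
  refine .intro hcompact fun x hx => setIntegral_eq_zero_of_forall_eq_zero fun z hz => ?_
  have hfz : f (x - z.2 • z.1) = 0 := by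
    by_contra hne
    exact hx ⟨(x - z.2 • z.1, z), ⟨subset_tsupport f hne, hz⟩, by simp⟩
  simp [hfz]

variable [FiniteDimensional ℝ E] [BorelSpace E]

theorem contDiff_transportPotential [IsLocallyFiniteMeasure μ] (ℓ : E →L[ℝ] ℝ) {n : ℕ∞}
    (hf : ContDiff ℝ n f) (hg : ContDiff ℝ n g) (hgc : HasCompactSupport g) :
    ContDiff ℝ n (transportPotential L μ f g ℓ) :=
  contDiff_setIntegral_of_isCompact (hgc.isCompact.prod isCompact_Icc)
    (contDiff_uncurry_smul_bilin_sub_smul L ℓ hf hg)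

theorem fderiv_transportPotential_apply [IsLocallyFiniteMeasure μ] (ℓ : E →L[ℝ] ℝ)
    (hf : ContDiff ℝ 1 f) (hg : ContDiff ℝ 1 g) (hgc : HasCompactSupport g) (x v : E) :
    fderiv ℝ (transportPotential L μ f g ℓ) x v =
      ∫ z in tsupport g ×ˢ Icc (0 : ℝ) 1, ℓ z.1 • L (fderiv ℝ f (x - z.2 • z.1) v) (g z.1)
        ∂μ.prod volume := by
  unfold transportPotential
  rw [fderiv_setIntegral_apply (hgc.isCompact.prod isCompact_Icc)
    (contDiff_uncurry_smul_bilin_sub_smul L ℓ hf hg)]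
  congr with z
  have htranslate : HasFDerivAt (fun x => f (x - z.2 • z.1)) (fderiv ℝ f (x - z.2 • z.1)) x :=
    (hasFDerivAt_comp_sub _).2 (hf.differentiable one_ne_zero _).hasFDerivAt
  have hintegrand := ((L.flip (g z.1)).hasFDerivAt.comp x htranslate).const_smul (ℓ z.1)
  exact DFunLike.congr_fun hintegrand.fderiv v

theorem sum_fderiv_transportPotential_apply [IsLocallyFiniteMeasure μ] (b : Module.Basis ι ℝ E)
    (hf : ContDiff ℝ 1 f) (hg : ContDiff ℝ 1 g) (hgc : HasCompactSupport g) (x : E) :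
    ∑ i, fderiv ℝ (transportPotential L μ f g (b.coord i).toContinuousLinearMap) x (b i) =
      ∫ z in tsupport g ×ˢ Icc (0 : ℝ) 1, L (fderiv ℝ f (x - z.2 • z.1) z.1) (g z.1)
        ∂μ.prod volume := by
  simp_rw [fderiv_transportPotential_apply L _ hf hg hgc]
  rw [← integral_finsetSum _ fun i _ => ContinuousOn.integrableOn_compact
    (hgc.isCompact.prod isCompact_Icc) (Continuous.continuousOn (by fun_prop))]
  congr with z
  calc
    _ = L (fderiv ℝ f (x - z.2 • z.1) (∑ i, b.repr z.1 i • b i)) (g z.1) := by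
      simp [-Module.Basis.sum_repr]
    _ = L (fderiv ℝ f (x - z.2 • z.1) z.1) (g z.1) := by rw [b.sum_repr]

variable [μ.IsAddHaarMeasure] [CompleteSpace F₂] [CompleteSpace F₃]

theorem integral_bilin_sub_translate (hf : Continuous f) (hg : Continuous g)
    (hgc : HasCompactSupport g) (x : E) :
    ∫ y, L (f x - f (x - y)) (g y) ∂μ = L (f x) (∫ y, g y ∂μ) - (f ⋆[L, μ] g) x := by
  have hg_int : Integrable g μ := hg.integrable_of_hasCompactSupport hgc
  have hconv : Integrable (fun y => L (f (x - y)) (g y)) μ :=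
    Continuous.integrable_of_hasCompactSupport (by fun_prop)
      (hgc.mono fun y hy hgy => hy (by simp [hgy]))
  simp only [map_sub, sub_apply]
  rw [integral_sub ((L (f x)).integrable_comp hg_int) hconv, (L (f x)).integral_comp_comm hg_int,
    convolution_eq_swap]

variable [CompleteSpace F₁]

theorem sum_fderiv_transportPotential_eq_sub_convolution (b : Module.Basis ι ℝ E)
    (hf : ContDiff ℝ 1 f) (hg : ContDiff ℝ 1 g) (hgc : HasCompactSupport g) (x : E) :
    ∑ i, fderiv ℝ (transportPotential L μ f g (b.coord i).toContinuousLinearMap) x (b i) =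
      L (f x) (∫ y, g y ∂μ) - (f ⋆[L, μ] g) x :=
  calc
    _ = ∫ z in tsupport g ×ˢ Icc (0 : ℝ) 1, L (fderiv ℝ f (x - z.2 • z.1) z.1) (g z.1)
          ∂μ.prod volume := sum_fderiv_transportPotential_apply L b hf hg hgc x
    _ = ∫ y in tsupport g, (∫ t in Icc (0 : ℝ) 1, L (fderiv ℝ f (x - t • y) y) (g y)) ∂μ :=
      setIntegral_prod _ <| ContinuousOn.integrableOn_compact
        (hgc.isCompact.prod isCompact_Icc) (Continuous.continuousOn (by fun_prop))
    _ = ∫ y in tsupport g, L (f x - f (x - y)) (g y) ∂μ := by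
      congr with y
      rw [← setIntegral_Icc_fderiv_sub_smul hf]
      exact (L.flip (g y)).integral_comp_comm <|
        ContinuousOn.integrableOn_compact isCompact_Icc (Continuous.continuousOn (by fun_prop))
    _ = ∫ y, L (f x - f (x - y)) (g y) ∂μ :=
      setIntegral_eq_integral_of_forall_compl_eq_zero fun y hy => by
        simp [image_eq_zero_of_notMem_tsupport hy]
    _ = L (f x) (∫ y, g y ∂μ) - (f ⋆[L, μ] g) x :=
      integral_bilin_sub_translate L hf.continuous hg.continuous hgc x

theorem isTestDivergence_sub_convolution (b : Module.Basis ι ℝ E) (hf : ContDiff ℝ ∞ f)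
    (hfc : HasCompactSupport f) (hg : ContDiff ℝ ∞ g) (hgc : HasCompactSupport g) :
    IsTestDivergence b fun x => L (f x) (∫ y, g y ∂μ) - (f ⋆[L, μ] g) x :=
  ⟨fun i => transportPotential L μ f g (b.coord i).toContinuousLinearMap,
    fun _ => contDiff_transportPotential L _ hf hg hgc,
    fun _ => hasCompactSupport_transportPotential L _ hfc hgc,
    funext fun x => (sum_fderiv_transportPotential_eq_sub_convolution L b (hf.of_le (by simp))
      (hg.of_le (by simp)) hgc x).symm⟩

end TransportPotential

section Characterization

variable {ι E F : Type*} [Fintype ι] [NormedAddCommGroup E] [NormedSpace ℝ E] [MeasurableSpace E]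
  [BorelSpace E] [NormedAddCommGroup F] [NormedSpace ℝ F] [CompleteSpace F] {μ : Measure E}
  [μ.IsAddHaarMeasure] {f : E → F}

open ContinuousLinearMap in
theorem isTestDivergence_integral_smul_sub [FiniteDimensional ℝ E] (b : Module.Basis ι ℝ E)
    {φ : E → ℝ} (hφ : ContDiff ℝ ∞ φ) (hφc : HasCompactSupport φ) (hf : ContDiff ℝ ∞ f)
    (hfc : HasCompactSupport f) :
    IsTestDivergence b fun x => (∫ y, φ y ∂μ) • f x - φ x • ∫ y, f y ∂μ := by
  have hfφ := isTestDivergence_sub_convolution (lsmul ℝ ℝ).flip (μ := μ) b hf hfc hφ hφc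
  have hφf := isTestDivergence_sub_convolution (lsmul ℝ ℝ) (μ := μ) b hφ hφc hf hfc
  rw [convolution_flip] at hfφ
  convert hfφ.sub hφf using 1
  ext x
  simp

theorem divergence_rep_iff_integral_eq_zero_general (b : Module.Basis ι ℝ E)
    (hf : ContDiff ℝ ∞ f) (hfc : HasCompactSupport f) :
    IsTestDivergence b f ↔ ∫ x, f x ∂μ = 0 := by
  have : FiniteDimensional ℝ E := b.finiteDimensional_of_finite
  refine ⟨IsTestDivergence.integral_eq_zero, fun hf₀ => ?_⟩
  let φ : ContDiffBump (0 : E) := ⟨1, 2, one_pos, one_lt_two⟩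
  simpa [φ.integral_normed, hf₀] using isTestDivergence_integral_smul_sub (μ := μ) b
    (φ.contDiff_normed (μ := μ)) φ.hasCompactSupport_normed hf hfc

end Characterization

/-- Let `n ≥ 1` and `f ∈ C_c^∞(ℝⁿ)`.  There exist
`h₁, …, hₙ ∈ C_c^∞(ℝⁿ)` with `f = Σᵢ ∂hᵢ/∂xⁱ` if and only if `∫_{ℝⁿ} f(x) dⁿx = 0`. -/
theorem divergence_rep_iff_integral_eq_zero
    (n : ℕ) (hn : 1 ≤ n)
    (f : EuclideanSpace ℝ (Fin n) → ℂ)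
    (hf : ContDiff ℝ (⊤ : ℕ∞) f)
    (hfc : HasCompactSupport f) :
    (∃ h : Fin n → EuclideanSpace ℝ (Fin n) → ℂ,
        (∀ i, ContDiff ℝ (⊤ : ℕ∞) (h i)) ∧
        (∀ i, HasCompactSupport (h i)) ∧
        f = fun x => ∑ i, partialDeriv (h i) i x) ↔
      ∫ x, f x = 0 := by
  simpa [IsTestDivergence, partialDeriv] using divergence_rep_iff_integral_eq_zero_general
    (μ := volume) (EuclideanSpace.basisFun (Fin n) ℝ).toBasis hf hfc
end
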